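/- Let n ∈ ℕ and p₁,…,pₙ ∈ ℕ₀. The function ζ_{p₁,…,pₙ}(s) := Σ'_{k∈ℤⁿ} k₁^{p₁}⋯kₙ^{pₙ} / |k|^s has a meromorphic extension to the whole complex plane with at most one pole, at s = n + p₁ + ⋯ + pₙ. If all p_i are even, this pole is simple with residue Res_{s=n+p₁+⋯+pₙ} ζ_{p₁,…,pₙ}(s) = 2 Γ((p₁+1)/2) ⋯ Γ((pₙ+1)/2) / Γ((n+p₁+⋯+pₙ)/2); if some p_i is odd, the extension is entire (in fact ζ_{p₁,…,pₙ} vanishes identically). -/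

import Mathlib

open Filter Topology

noncomputable section

/-- Euclidean norm of an integer vector `k ∈ ℤⁿ`. -/
def znorm {n : ℕ} (k : Fin n → ℤ) : ℝ := Real.sqrt (∑ i, ((k i : ℝ)) ^ 2)

/-- Term of `ζ_{p₁,…,pₙ}(s) = Σ'_{k∈ℤⁿ} k₁^{p₁}⋯kₙ^{pₙ}/|k|^s`
(term at `k = 0` omitted). -/
def zetaMonTerm {n : ℕ} (p : Fin n → ℕ) (s : ℂ) (k : Fin n → ℤ) : ℂ :=
  if k = 0 then 0 else (∏ i, ((k i : ℤ) : ℂ) ^ p i) / ((znorm k : ℂ) ^ s)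

open scoped FourierTransform SchwartzMap

lemma gauss_iter (n : ℕ) : ∃ Q : Polynomial ℝ, iteratedDeriv n
    (fun x : ℝ => ((Real.exp (-Real.pi * x ^ 2) : ℝ) : ℂ)) =
    fun x : ℝ => ((Q.eval x * Real.exp (-Real.pi * x ^ 2) : ℝ) : ℂ) := by
  induction n with
  | zero => exact ⟨1, by simp⟩
  | succ n ih =>
    obtain ⟨Q, hQ⟩ := ih
    refine ⟨Polynomial.derivative Q + Q * (Polynomial.C (-2 * Real.pi) * Polynomial.X), ?_⟩
    rw [iteratedDeriv_succ, hQ]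
    ext x
    have h1 : HasDerivAt (fun x : ℝ => Real.exp (-Real.pi * x ^ 2))
        (Real.exp (-Real.pi * x ^ 2) * (-Real.pi * (2 * x))) x := by
      have := ((hasDerivAt_pow 2 x).const_mul (-Real.pi)).exp
      simpa using this
    have h2 := ((Q.hasDerivAt x).mul h1).ofReal_comp
    refine h2.deriv.trans ?_
    simp
    ring

lemma mono_bound (m : ℕ) (x : ℝ) :
    |x| ^ m * Real.exp (-Real.pi * x ^ 2) ≤ 1 + m.factorial := by
  have h1 : |x| ^ m ≤ 1 + (x ^ 2) ^ m := by
    rw [← sq_abs, ← pow_mul, mul_comm 2 m, pow_mul]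
    nlinarith [sq_nonneg (|x| ^ m - 1), sq_nonneg (|x| ^ m)]
  have h2 : (x ^ 2) ^ m ≤ m.factorial * Real.exp (x ^ 2) := by
    have := Real.pow_div_factorial_le_exp (x ^ 2) (sq_nonneg x) m
    rwa [div_le_iff₀' (by positivity)] at this
  have h3 : Real.exp (-Real.pi * x ^ 2) ≤ Real.exp (- x ^ 2) := by
    apply Real.exp_le_exp.2
    nlinarith [Real.pi_gt_three, sq_nonneg x]
  have h4 : Real.exp (- x ^ 2) ≤ 1 := by
    apply Real.exp_le_one_iff.2; nlinarith [sq_nonneg x]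
  have h5 : Real.exp (x ^ 2) * Real.exp (- x ^ 2) = 1 := by
    rw [← Real.exp_add]; simp
  calc _ ≤ (1 + m.factorial * Real.exp (x ^ 2)) * Real.exp (- x ^ 2) := by
        gcongr; linarith
    _ = Real.exp (- x ^ 2) + m.factorial * (Real.exp (x ^ 2) * Real.exp (- x ^ 2)) := by ring
    _ ≤ _ := by rw [h5]; linarith

lemma poly_bound (Q : Polynomial ℝ) :
    ∃ C : ℝ, ∀ x : ℝ, |Q.eval x| * Real.exp (-Real.pi * x ^ 2) ≤ C := by
  induction Q using Polynomial.induction_on' with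
  | add p q hp hq =>
    obtain ⟨C, hC⟩ := hp
    obtain ⟨D, hD⟩ := hq
    refine ⟨C + D, fun x => ?_⟩
    rw [Polynomial.eval_add]
    have := abs_add_le (p.eval x) (q.eval x)
    nlinarith [hC x, hD x, Real.exp_pos (-Real.pi * x ^ 2)]
  | monomial m a =>
    refine ⟨|a| * (1 + m.factorial), fun x => ?_⟩
    rw [Polynomial.eval_monomial, abs_mul, abs_pow, mul_assoc]
    exact mul_le_mul_of_nonneg_left (mono_bound m x) (abs_nonneg a)

lemma exists_gauss : ∃ φ : 𝓢(ℝ, ℂ), ∀ x : ℝ, φ x = ((Real.exp (-Real.pi * x ^ 2) : ℝ) : ℂ) := by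
  refine ⟨⟨fun x : ℝ => ((Real.exp (-Real.pi * x ^ 2) : ℝ) : ℂ), ?_, ?_⟩, fun x => rfl⟩
  · have h : ContDiff ℝ (⊤ : ℕ∞) (fun x : ℝ => Real.exp (-Real.pi * x ^ 2)) := by fun_prop
    exact Complex.ofRealCLM.contDiff.comp h
  · intro k n
    obtain ⟨Q, hQ⟩ := gauss_iter n
    obtain ⟨C, hC⟩ := poly_bound (Polynomial.X ^ k * Q)
    refine ⟨C, fun x => ?_⟩
    rw [norm_iteratedFDeriv_eq_norm_iteratedDeriv, hQ]
    refine le_trans (le_of_eq ?_) (hC x)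
    simp [abs_mul, mul_assoc, -Complex.ofReal_exp, -Complex.ofReal_mul]

lemma exists_phi (p : ℕ) : ∃ φ : 𝓢(ℝ, ℂ), ∀ x : ℝ,
    φ x = (x : ℂ) ^ p * ((Real.exp (-Real.pi * x ^ 2) : ℝ) : ℂ) := by
  obtain ⟨φ, hφ⟩ := exists_gauss
  have hg : (fun x : ℝ => (x : ℂ) ^ p).HasTemperateGrowth :=
    by fun_prop
  exact ⟨SchwartzMap.smulLeftCLM ℂ (fun x : ℝ => (x : ℂ) ^ p) φ, fun x => by
    rw [SchwartzMap.smulLeftCLM_apply_apply hg, hφ, smul_eq_mul]⟩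

lemma schwartz_bound (ψ : 𝓢(ℝ, ℂ)) (N : ℕ) : ∃ C : ℝ, 0 < C ∧ ∀ a : ℝ, 0 < a → ∀ m : ℤ,
    ‖(if m = 0 then 0 else ψ (a * m))‖ ≤ C * (a ^ N)⁻¹ * (1 / |(m:ℝ)| ^ N) := by
  obtain ⟨C, hC, h⟩ := ψ.decay N 0
  refine ⟨C, hC, fun a ha m => ?_⟩
  split_ifs with hm
  · simp; positivity
  · have hm' : 0 < |(m : ℝ)| := by positivity
    have := h (a * m)
    rw [norm_iteratedFDeriv_zero, norm_mul, Real.norm_of_nonneg ha.le, Real.norm_eq_abs,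
      mul_pow, ← le_div_iff₀' (by positivity)] at this
    refine this.trans (le_of_eq ?_)
    field_simp

lemma schwartz_summable' (ψ : 𝓢(ℝ, ℂ)) {a : ℝ} (ha : 0 < a) :
    Summable (fun m : ℤ => if m = 0 then 0 else ψ (a * m)) := by
  obtain ⟨C, hC, h⟩ := schwartz_bound ψ 2
  refine Summable.of_norm_bounded (g := fun m : ℤ => C * (a ^ 2)⁻¹ * (1 / |(m:ℝ)| ^ 2)) ?_ (h a ha)
  apply Summable.mul_left
  simpa using (Real.summable_one_div_int_pow (p := 2)).2 (by norm_num)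

lemma schwartz_summable (ψ : 𝓢(ℝ, ℂ)) {a : ℝ} (ha : 0 < a) :
    Summable (fun m : ℤ => ψ (a * m)) := by
  refine ((schwartz_summable' ψ ha).add (hasSum_pi_single (0:ℤ) (ψ 0)).summable).congr ?_
  intro m
  by_cases hm : m = 0
  · simp [hm]
  · simp [hm]

lemma schwartz_asymp (ψ : 𝓢(ℝ, ℂ)) (r : ℝ) :
    (fun a : ℝ => ∑' m : ℤ, ψ (a * m) - ψ 0) =O[atTop] (fun a : ℝ => a ^ r) := by
  obtain ⟨N, hN⟩ := exists_nat_ge (max 2 (-r))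
  have hN2 : 2 ≤ N := by exact_mod_cast (le_max_left _ _).trans hN
  have hNr : -(N:ℝ) ≤ r := by linarith [(le_max_right _ _).trans hN]
  obtain ⟨C, hC, h⟩ := schwartz_bound ψ N
  have hs : Summable (fun m : ℤ => 1 / |(m:ℝ)| ^ N) := by
    have := ((Real.summable_one_div_int_pow (p := N)).2 (by omega)).norm
    simpa using this
  refine Asymptotics.IsBigO.of_bound (C * ∑' m : ℤ, 1 / |(m:ℝ)| ^ N) ?_
  filter_upwards [eventually_ge_atTop 1] with a ha
  have ha0 : 0 < a := by linarith
  rw [(schwartz_summable ψ ha0).tsum_eq_add_tsum_ite 0]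
  simp only [Int.cast_zero, mul_zero, add_sub_cancel_left]
  refine (tsum_of_norm_bounded (hs.mul_left (C * (a ^ N)⁻¹)).hasSum (h a ha0)).trans ?_
  rw [tsum_mul_left, Real.norm_of_nonneg (by positivity)]
  have h1 : (a ^ N)⁻¹ ≤ a ^ r := by
    rw [← Real.rpow_natCast, ← Real.rpow_neg ha0.le]
    exact Real.rpow_le_rpow_of_exponent_le ha hNr
  have h2 : 0 ≤ ∑' m : ℤ, 1 / |(m:ℝ)| ^ N := tsum_nonneg fun m => by positivity
  calc _ = (C * ∑' m : ℤ, 1 / |(m:ℝ)| ^ N) * (a ^ N)⁻¹ := by ring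
    _ ≤ _ := by gcongr

lemma schwartz_poisson (ψ : 𝓢(ℝ, ℂ)) {a : ℝ} (ha : 0 < a) :
    ∑' m : ℤ, ψ (a * m) = ((a⁻¹ : ℝ) : ℂ) * ∑' m : ℤ, (𝓕 ψ) (a⁻¹ * m) := by
  let e : ℝ ≃L[ℝ] ℝ := ContinuousLinearEquiv.unitsEquivAut ℝ (Units.mk0 a ha.ne')
  let χ : 𝓢(ℝ, ℂ) := SchwartzMap.compCLMOfContinuousLinearEquiv ℝ e ψ
  have hχ : ∀ x, χ x = ψ (a * x) := fun x => by
    simp [χ, e, mul_comm]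
  have hF : ∀ y : ℝ, (𝓕 χ) y = ((a⁻¹ : ℝ) : ℂ) * (𝓕 ψ) (a⁻¹ * y) := by
    intro y
    rw [SchwartzMap.fourier_coe, SchwartzMap.fourier_coe, Real.fourier_real_eq, Real.fourier_real_eq]
    simp_rw [hχ]
    have := MeasureTheory.Measure.integral_comp_mul_left
      (fun v : ℝ => Real.fourierChar (-(v * (a⁻¹ * y))) • ψ v) a
    rw [abs_of_pos (inv_pos.2 ha), Complex.real_smul] at this
    rw [← this]
    congr 1
    ext v
    congr 3
    field_simp
  have := SchwartzMap.tsum_eq_tsum_fourier χ 0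
  simp only [zero_add, hχ, hF] at this
  rw [this, ← tsum_mul_left]
  simp

lemma fourier_phi_zero (p : ℕ) (hp : Even p) (φ : 𝓢(ℝ, ℂ)) (hφ : ∀ x : ℝ,
    φ x = (x : ℂ) ^ p * ((Real.exp (-Real.pi * x ^ 2) : ℝ) : ℂ)) :
    (𝓕 φ) 0 = ((Real.pi ^ (-((p:ℝ) + 1) / 2) * Real.Gamma (((p:ℝ) + 1) / 2) : ℝ) : ℂ) := by
  rw [SchwartzMap.fourier_coe, Real.fourier_real_eq]
  simp only [mul_zero, neg_zero, AddChar.map_zero_eq_one, one_smul, hφ]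
  have h1 : ∀ x : ℝ, (x : ℂ) ^ p * ((Real.exp (-Real.pi * x ^ 2) : ℝ) : ℂ) =
      (((fun y : ℝ => y ^ (p:ℝ) * Real.exp (-Real.pi * y ^ (2:ℝ))) |x| : ℝ) : ℂ) := by
    intro x
    simp [hp.pow_abs]
  simp_rw [h1]
  rw [integral_complex_ofReal,
    integral_comp_abs (f := fun y : ℝ => y ^ (p:ℝ) * Real.exp (-Real.pi * y ^ (2:ℝ))),
    integral_rpow_mul_exp_neg_mul_rpow (by norm_num) (by linarith [p.cast_nonneg (α := ℝ)]) Real.pi_pos]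
  congr 1
  ring

lemma hasSum_pi_prod {R : Type*} [NormedField R] [CompleteSpace R] : ∀ (n : ℕ) (f : Fin n → ℤ → R)
    (_ : ∀ i, Summable fun m => ‖f i m‖),
    (Summable fun k : Fin n → ℤ => ‖∏ i, f i (k i)‖) ∧
    HasSum (fun k : Fin n → ℤ => ∏ i, f i (k i)) (∏ i, ∑' m, f i m) := by
  intro n
  induction n with
  | zero =>
    intro f _
    refine ⟨.of_finite, ?_⟩
    convert hasSum_fintype (fun k : Fin 0 → ℤ => ∏ i, f i (k i)) using 1
    simp
  | succ n ih =>
    intro f hf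
    obtain ⟨h1, h2⟩ := ih (fun i => f i.succ) (fun i => hf _)
    have e := Fin.consEquiv (fun _ : Fin (n+1) => ℤ)
    constructor
    · rw [← (Fin.consEquiv (fun _ : Fin (n+1) => ℤ)).summable_iff]
      have := summable_mul_of_summable_norm (hf 0).norm h1.norm
      refine this.congr fun x => ?_
      simp [Fin.consEquiv, Fin.prod_univ_succ]
    · rw [← (Fin.consEquiv (fun _ : Fin (n+1) => ℤ)).hasSum_iff, Fin.prod_univ_succ]
      have hs : Summable fun x : ℤ × (Fin n → ℤ) => f 0 x.1 * ∏ i, f (Fin.succ i) (x.2 i) :=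
        summable_mul_of_summable_norm (f := f 0)
          (g := fun k : Fin n → ℤ => ∏ i, f (Fin.succ i) (k i)) (hf 0) h1
      have h3 : HasSum (fun x : ℤ × (Fin n → ℤ) => f 0 x.1 * ∏ i, f (Fin.succ i) (x.2 i)) _ :=
        HasSum.mul (f := f 0)
          (g := fun k : Fin n → ℤ => ∏ i, f (Fin.succ i) (k i)) (hf 0).of_norm.hasSum h2 hs
      refine h3.congr_fun fun x => ?_
      simp [Fin.consEquiv, Fin.prod_univ_succ]

/-- One-dimensional theta series. -/
def th (p : ℕ) (t : ℝ) : ℂ :=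
  ∑' m : ℤ, (m : ℂ) ^ p * ((Real.exp (-Real.pi * t * (m:ℝ) ^ 2) : ℝ) : ℂ)

lemma th_term (p : ℕ) (φ : 𝓢(ℝ, ℂ)) (hφ : ∀ x : ℝ,
    φ x = (x : ℂ) ^ p * ((Real.exp (-Real.pi * x ^ 2) : ℝ) : ℂ)) {t : ℝ} (ht : 0 < t) (m : ℤ) :
    (m : ℂ) ^ p * ((Real.exp (-Real.pi * t * (m:ℝ) ^ 2) : ℝ) : ℂ) =
      (((Real.sqrt t) ^ p : ℝ) : ℂ)⁻¹ * φ (Real.sqrt t * m) := by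
  rw [hφ, mul_pow, Real.sq_sqrt ht.le]
  have : (((Real.sqrt t) : ℝ) : ℂ) ≠ 0 := by
    exact_mod_cast (Real.sqrt_pos.2 ht).ne'
  rw [← mul_assoc (-Real.pi)]
  push_cast
  rw [mul_pow]
  field_simp

lemma th_summable (p : ℕ) {t : ℝ} (ht : 0 < t) : Summable fun m : ℤ =>
    ‖(m : ℂ) ^ p * ((Real.exp (-Real.pi * t * (m:ℝ) ^ 2) : ℝ) : ℂ)‖ := by
  obtain ⟨φ, hφ⟩ := exists_phi p
  simp_rw [th_term p φ hφ ht]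
  exact ((schwartz_summable φ (Real.sqrt_pos.2 ht)).mul_left _).norm

lemma th_eq (p : ℕ) (φ : 𝓢(ℝ, ℂ)) (hφ : ∀ x : ℝ,
    φ x = (x : ℂ) ^ p * ((Real.exp (-Real.pi * x ^ 2) : ℝ) : ℂ)) {t : ℝ} (ht : 0 < t) :
    th p t = (((Real.sqrt t) ^ p : ℝ) : ℂ)⁻¹ * ∑' m : ℤ, φ (Real.sqrt t * m) := by
  rw [th, ← tsum_mul_left]
  exact tsum_congr fun m => th_term p φ hφ ht m

lemma sqrt_asymp (ψ : 𝓢(ℝ, ℂ)) (r : ℝ) :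
    (fun t : ℝ => ∑' m : ℤ, ψ (Real.sqrt t * m) - ψ 0) =O[atTop] (fun t : ℝ => t ^ r) := by
  refine ((schwartz_asymp ψ (2 * r)).comp_tendsto Real.tendsto_sqrt_atTop).congr' .rfl ?_
  filter_upwards [eventually_ge_atTop 0] with t ht
  simp only [Function.comp_apply]
  rw [Real.sqrt_eq_rpow, ← Real.rpow_mul ht]
  congr 1
  ring

lemma th_top (p : ℕ) (r : ℝ) :
    (fun t : ℝ => th p t - 0 ^ p) =O[atTop] (fun t : ℝ => t ^ r) := by
  obtain ⟨φ, hφ⟩ := exists_phi p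
  have h0 : φ 0 = 0 ^ p := by simp [hφ]
  have h1 : (fun t : ℝ => (((Real.sqrt t) ^ p : ℝ) : ℂ)⁻¹) =O[atTop] (fun _ : ℝ => (1 : ℝ)) := by
    refine Asymptotics.IsBigO.of_bound 1 ?_
    filter_upwards [eventually_ge_atTop 1] with t ht
    simp only [norm_inv, norm_one, mul_one, Complex.norm_real, norm_pow]
    apply inv_le_one_of_one_le₀
    apply one_le_pow₀
    rw [Real.norm_of_nonneg (Real.sqrt_nonneg t)]
    exact Real.one_le_sqrt.2 ht
  refine (h1.mul (sqrt_asymp φ r)).congr' ?_ (by simp)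
  filter_upwards [eventually_gt_atTop 0] with t ht
  rw [th_eq p φ hφ ht, mul_sub, h0]
  congr 1
  rcases p.eq_zero_or_pos with rfl | hp
  · simp
  · simp [hp.ne']

lemma th_zero (p : ℕ) : ∃ c : ℂ, (Even p → c =
      ((Real.pi ^ (-((p:ℝ) + 1) / 2) * Real.Gamma (((p:ℝ) + 1) / 2) : ℝ) : ℂ)) ∧ ∀ r : ℝ,
    (fun x : ℝ => ((x ^ (-((p:ℝ) + 1) / 2) : ℝ) : ℂ) * th p (1 / x) - c)
      =O[atTop] (fun t : ℝ => t ^ r) := by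
  obtain ⟨φ, hφ⟩ := exists_phi p
  refine ⟨(𝓕 φ) 0, fun hp => fourier_phi_zero p hp φ hφ, fun r => ?_⟩
  refine (sqrt_asymp (𝓕 φ) r).congr' ?_ .rfl
  filter_upwards [eventually_gt_atTop 0] with x hx
  congr 1
  have hs := Real.sqrt_pos.2 hx
  rw [th_eq p φ hφ (by positivity), schwartz_poisson φ (Real.sqrt_pos.2 (by positivity))]
  simp only [one_div, Real.sqrt_inv, inv_inv]
  rw [← mul_assoc, ← mul_assoc]
  have : x ^ (-((p:ℝ) + 1) / 2) = ((Real.sqrt x) ^ (p + 1))⁻¹ := by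
    rw [Real.sqrt_eq_rpow, ← Real.rpow_natCast, ← Real.rpow_mul hx.le, ← Real.rpow_neg hx.le]
    congr 1
    push_cast
    ring
  rw [this]
  have : ((Real.sqrt x : ℝ) : ℂ) ≠ 0 := by exact_mod_cast hs.ne'
  push_cast
  rw [pow_succ, inv_pow, inv_inv]
  field_simp

lemma th_cont (p : ℕ) : ContinuousOn (th p) (Set.Ioi 0) := by
  intro t ht
  have ht' : 0 < t := ht
  apply ContinuousAt.continuousWithinAt
  have : ContinuousOn (th p) (Set.Ioi (t / 2)) := by
    unfold th
    refine continuousOn_tsum (fun m => ?_) (th_summable p (half_pos ht')) ?_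
    · apply Continuous.continuousOn
      fun_prop
    · intro m x hx
      rw [norm_mul, norm_mul]
      gcongr 1
      rw [Complex.norm_real, Complex.norm_real, Real.norm_of_nonneg (Real.exp_pos _).le,
        Real.norm_of_nonneg (Real.exp_pos _).le]
      apply Real.exp_le_exp.2
      have : t / 2 ≤ x := le_of_lt hx
      rw [neg_mul, neg_mul, neg_mul, neg_mul]
      have := Real.pi_pos
      gcongr
  exact this.continuousAt (Ioi_mem_nhds (half_lt_self ht'))

lemma prod_asymp {ι : Type*} (s : Finset ι) (f : ι → ℝ → ℂ) (c : ι → ℂ)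
    (h : ∀ i, ∀ r : ℝ, (fun x => f i x - c i) =O[atTop] (fun t : ℝ => t ^ r)) (r : ℝ) :
    (fun x => ∏ i ∈ s, f i x - ∏ i ∈ s, c i) =O[atTop] (fun t : ℝ => t ^ r) := by
  classical
  induction s using Finset.induction_on with
  | empty => simpa using Asymptotics.isBigO_zero _ _
  | insert i s hi ih =>
    have h1 : (fun x => f i x - c i) =O[atTop] (fun _ : ℝ => (1:ℝ)) := by
      simpa using h i 0
    have h2 := h1.mul ih
    have h3 := (h i r).const_mul_left (∏ i ∈ s, c i)
    have h4 := ih.const_mul_left (c i)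
    simp only [one_mul] at h2
    refine ((h2.add h3).add h4).congr_left fun x => ?_
    rw [Finset.prod_insert hi, Finset.prod_insert hi]
    ring

lemma znorm_sq {n : ℕ} (k : Fin n → ℤ) : znorm k ^ 2 = ∑ i, ((k i : ℝ)) ^ 2 :=
  Real.sq_sqrt (Finset.sum_nonneg fun i _ => sq_nonneg _)

lemma znorm_nonneg {n : ℕ} (k : Fin n → ℤ) : 0 ≤ znorm k := Real.sqrt_nonneg _

lemma abs_le_znorm {n : ℕ} (k : Fin n → ℤ) (i : Fin n) : |(k i : ℝ)| ≤ znorm k := by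
  apply Real.abs_le_sqrt
  exact Finset.single_le_sum (f := fun i => ((k i : ℝ)) ^ 2) (fun i _ => sq_nonneg _)
    (Finset.mem_univ i)

lemma one_le_znorm {n : ℕ} (k : Fin n → ℤ) (hk : k ≠ 0) : 1 ≤ znorm k := by
  obtain ⟨i, hi⟩ := Function.ne_iff.1 hk
  refine le_trans ?_ (abs_le_znorm k i)
  exact_mod_cast Int.one_le_abs hi

lemma znorm_eq_zero {n : ℕ} (k : Fin n → ℤ) : znorm k = 0 ↔ k = 0 := by
  constructor
  · intro h
    by_contra hk
    linarith [one_le_znorm k hk]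
  · rintro rfl
    simp [znorm]

lemma summable_one_add {b : ℝ} (hb : 1 < b) : Summable fun m : ℤ => (1 + |(m:ℝ)|) ^ (-b) := by
  refine Summable.of_norm_bounded_eventually (Real.summable_abs_int_rpow hb) ?_
  filter_upwards [(Set.finite_singleton (0:ℤ)).compl_mem_cofinite] with m hm
  have hm' : m ≠ 0 := hm
  have : 0 < |(m:ℝ)| := by positivity
  rw [Real.norm_of_nonneg (by positivity)]
  apply Real.rpow_le_rpow_of_nonpos this (by linarith) (by linarith)

lemma main_summable (n : ℕ) (hn : 0 < n) (p : Fin n → ℕ) (σ : ℝ)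
    (hσ : (n : ℝ) + ∑ i, (p i : ℝ) < σ) :
    Summable fun k : Fin n → ℤ => ‖∏ i, ((k i : ℤ) : ℂ) ^ p i‖ / |znorm k| ^ σ := by
  set τ : ℝ := σ - ∑ i, (p i : ℝ) with hτ
  have hn' : (0:ℝ) < n := by exact_mod_cast hn
  have hb : 1 < τ / n := by rw [lt_div_iff₀ hn']; linarith
  have hτ0 : 0 < τ := by linarith
  have hσ0 : 0 < σ := by
    have : 0 ≤ ∑ i, (p i : ℝ) := Finset.sum_nonneg fun i _ => by positivity
    linarith
  have h1 := (hasSum_pi_prod n (fun (_ : Fin n) (m : ℤ) => (1 + |(m:ℝ)|) ^ (-(τ / n)))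
    (fun _ => (summable_one_add hb).norm)).2.summable.mul_left ((2:ℝ) ^ τ)
  refine Summable.of_nonneg_of_le (fun k => by positivity) (fun k => ?_) h1
  by_cases hk : k = 0
  · have : znorm k = 0 := (znorm_eq_zero k).2 hk
    rw [this, abs_zero, Real.zero_rpow hσ0.ne', div_zero]
    exact mul_nonneg (by positivity) (Finset.prod_nonneg fun i _ => by positivity)
  have hz := one_le_znorm k hk
  have hz0 : 0 < znorm k := by linarith
  have h2 : ‖∏ i, ((k i : ℤ) : ℂ) ^ p i‖ ≤ znorm k ^ (∑ i, (p i : ℝ)) := by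
    rw [norm_prod, Real.rpow_sum_of_pos hz0]
    refine Finset.prod_le_prod (fun i _ => norm_nonneg _) fun i _ => ?_
    rw [norm_pow, Complex.norm_intCast, Real.rpow_natCast]
    gcongr
    exact abs_le_znorm k i
  have h3 : ∏ i, (1 + |(k i:ℝ)|) ^ (τ / n) ≤ (2 * znorm k) ^ τ := by
    have : (2 * znorm k) ^ τ = ∏ i : Fin n, (2 * znorm k) ^ (τ / n) := by
      rw [Finset.prod_const, Finset.card_univ, Fintype.card_fin, ← Real.rpow_mul_natCast (by positivity)]
      congr 1
      field_simp
    rw [this]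
    refine Finset.prod_le_prod (fun i _ => by positivity) fun i _ => ?_
    apply Real.rpow_le_rpow (by positivity) _ (by positivity)
    linarith [abs_le_znorm k i]
  have h4 : ∏ i, (1 + |(k i:ℝ)|) ^ (-(τ / n)) = (∏ i, (1 + |(k i:ℝ)|) ^ (τ / n))⁻¹ := by
    rw [← Finset.prod_inv_distrib]
    exact Finset.prod_congr rfl fun i _ => Real.rpow_neg (by positivity) _
  have h5 : 0 < ∏ i, (1 + |(k i:ℝ)|) ^ (τ / n) := Finset.prod_pos fun i _ => by positivity
  rw [abs_of_pos hz0, h4]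
  calc _ ≤ znorm k ^ (∑ i, (p i : ℝ)) / znorm k ^ σ := by gcongr
    _ = (znorm k ^ τ)⁻¹ := by
      rw [← Real.rpow_sub hz0, ← Real.rpow_neg hz0.le]; congr 1; rw [hτ]; ring
    _ = 2 ^ τ * ((2 * znorm k) ^ τ)⁻¹ := by
      rw [Real.mul_rpow (by norm_num) hz0.le]; field_simp
    _ ≤ _ := by gcongr

lemma term_eq {n : ℕ} (p : Fin n → ℕ) (s : ℂ) (hs : s ≠ 0) (k : Fin n → ℤ) :
    zetaMonTerm p s k = (∏ i, ((k i : ℤ) : ℂ) ^ p i) / ((|znorm k| : ℝ) : ℂ) ^ s := by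
  rw [abs_of_nonneg (znorm_nonneg k), zetaMonTerm]
  split_ifs with hk
  · rw [(znorm_eq_zero k).2 hk, Complex.ofReal_zero, Complex.zero_cpow hs, div_zero]
  · rfl

lemma sigma_pos {n : ℕ} (hn : 0 < n) (p : Fin n → ℕ) : 0 < (n : ℝ) + ∑ i, (p i : ℝ) := by
  have hn' : (0:ℝ) < n := by exact_mod_cast hn
  have : 0 ≤ ∑ i, (p i : ℝ) := Finset.sum_nonneg fun i _ => by positivity
  linarith

lemma term_summable {n : ℕ} (hn : 0 < n) (p : Fin n → ℕ) (s : ℂ)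
    (hs : (n : ℝ) + ∑ i, (p i : ℝ) < s.re) : Summable (zetaMonTerm p s) := by
  have h0 := sigma_pos hn p
  have hs0 : s ≠ 0 := by rintro rfl; simp at hs; linarith
  refine Summable.of_norm ((main_summable n hn p s.re hs).congr fun k => ?_)
  rw [term_eq p s hs0, norm_div, Complex.norm_cpow_eq_rpow_re_of_nonneg (abs_nonneg _) (by linarith)]

lemma odd_case {n : ℕ} (hn : 0 < n) (p : Fin n → ℕ) (i : Fin n) (hi : Odd (p i)) (s : ℂ)
    (hs : (n : ℝ) + ∑ i, (p i : ℝ) < s.re) : HasSum (zetaMonTerm p s) 0 := by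
  have h := (term_summable hn p s hs).hasSum
  have h0 := sigma_pos hn p
  have hs0 : s ≠ 0 := by rintro rfl; simp at hs; linarith
  let e : (Fin n → ℤ) ≃ (Fin n → ℤ) :=
    Equiv.piCongrRight fun j => if j = i then Equiv.neg ℤ else Equiv.refl ℤ
  have he : ∀ k j, e k j = if j = i then - k j else k j := by
    intro k j
    simp only [e, Equiv.piCongrRight_apply, Pi.map_apply]
    split_ifs <;> simp
  have hz : ∀ k, znorm (e k) = znorm k := by
    intro k
    unfold znorm
    congr 1
    refine Finset.sum_congr rfl fun j _ => ?_
    rw [he]; split_ifs <;> simp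
  have hneg : ∀ k, zetaMonTerm p s (e k) = - zetaMonTerm p s k := by
    intro k
    rw [term_eq p s hs0, term_eq p s hs0, hz, ← neg_div]
    congr 1
    rw [← Finset.mul_prod_erase _ _ (Finset.mem_univ i),
      ← Finset.mul_prod_erase _ (fun j => ((k j : ℤ) : ℂ) ^ p j) (Finset.mem_univ i), ← neg_mul]
    congr 1
    · rw [he, if_pos rfl]; push_cast; rw [hi.neg_pow]
    · refine Finset.prod_congr rfl fun j hj => ?_
      rw [he, if_neg (Finset.ne_of_mem_erase hj)]
  have h1 : HasSum (fun k => - zetaMonTerm p s k) (∑' k, zetaMonTerm p s k) := by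
    have := e.hasSum_iff.2 h
    exact this.congr_fun fun k => (hneg k).symm
  have h2 := h1.unique h.neg
  have h3 : ∑' k, zetaMonTerm p s k = 0 := self_eq_neg.1 h2
  rwa [h3] at h

lemma theta_hasSum {n : ℕ} (p : Fin n → ℕ) {t : ℝ} (ht : 0 < t) :
    HasSum (fun k : Fin n → ℤ => if znorm k = 0 then 0 else
      (∏ i, ((k i : ℤ) : ℂ) ^ p i) * ((Real.exp (-Real.pi * znorm k ^ 2 * t) : ℝ) : ℂ))
      (∏ i, th (p i) t - ∏ i, (0:ℂ) ^ p i) := by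
  have h := (hasSum_pi_prod n (fun i (m : ℤ) =>
    (m : ℂ) ^ p i * ((Real.exp (-Real.pi * t * (m:ℝ) ^ 2) : ℝ) : ℂ))
    (fun i => th_summable (p i) ht)).2
  have h2 := h.sub (hasSum_pi_single (0 : Fin n → ℤ) (∏ i, (0:ℂ) ^ p i))
  refine h2.congr_fun fun k => ?_
  by_cases hk : k = 0
  · subst hk
    simp [znorm_eq_zero]
  · rw [if_neg (by rwa [znorm_eq_zero]), Pi.single_eq_of_ne hk, sub_zero, Finset.prod_mul_distrib]
    congr 1
    rw [← Complex.ofReal_prod, ← Real.exp_sum, znorm_sq, Finset.mul_sum, Finset.sum_mul]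
    congr 2
    refine Finset.sum_congr rfl fun i _ => ?_
    ring

/-- The pair of theta products. -/
def thetaPair {n : ℕ} (hn : 0 < n) (p : Fin n → ℕ) (c : Fin n → ℂ)
    (hc : ∀ i, ∀ r : ℝ, (fun x : ℝ => ((x ^ (-((p i:ℝ) + 1) / 2) : ℝ) : ℂ) * th (p i) (1 / x) - c i)
      =O[atTop] (fun t : ℝ => t ^ r)) : WeakFEPair ℂ where
  f t := ∏ i, th (p i) t
  g x := ∏ i, (((x ^ (-((p i:ℝ) + 1) / 2) : ℝ) : ℂ) * th (p i) (1 / x))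
  k := ((n : ℝ) + ∑ i, (p i : ℝ)) / 2
  ε := 1
  f₀ := ∏ i, (0:ℂ) ^ p i
  g₀ := ∏ i, c i
  hf_int := (continuousOn_finsetProd _ fun i _ => th_cont (p i)).locallyIntegrableOn
    measurableSet_Ioi
  hg_int := by
    refine ContinuousOn.locallyIntegrableOn (continuousOn_finsetProd _ fun i _ => ?_)
      measurableSet_Ioi
    refine ContinuousOn.mul ?_ ?_
    · refine Complex.continuous_ofReal.comp_continuousOn ?_
      intro x hx
      exact (Real.continuousAt_rpow_const x _ (Or.inl (ne_of_gt hx))).continuousWithinAt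
    · refine (th_cont (p i)).comp ?_ fun x hx => ?_
      · exact continuousOn_const.div continuousOn_id fun x hx => ne_of_gt hx
      · exact Set.mem_Ioi.2 (one_div_pos.2 (Set.mem_Ioi.1 hx))
  hk := half_pos (sigma_pos hn p)
  hε := one_ne_zero
  h_feq := by
    intro x hx
    have hx' : 0 < x := hx
    have h1 : ∏ i, x ^ (-((p i:ℝ) + 1) / 2) = (x ^ (((n : ℝ) + ∑ i, (p i : ℝ)) / 2))⁻¹ := by
      rw [← Real.rpow_neg hx'.le, ← Real.rpow_sum_of_pos hx', ← Finset.sum_div]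
      congr 1
      simp only [neg_add, Finset.sum_add_distrib, Finset.sum_neg_distrib, Finset.sum_const,
        Finset.card_univ, Fintype.card_fin]
      simp
      ring
    have h2 : x ^ (((n : ℝ) + ∑ i, (p i : ℝ)) / 2) ≠ 0 := (Real.rpow_pos_of_pos hx' _).ne'
    rw [Finset.prod_mul_distrib, ← Complex.ofReal_prod, h1, one_mul, smul_eq_mul, ← mul_assoc,
      ← Complex.ofReal_mul, mul_inv_cancel₀ h2, Complex.ofReal_one, one_mul]
  hf_top := prod_asymp _ (fun i => th (p i)) (fun i => (0:ℂ) ^ p i) fun i r => th_top (p i) r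
  hg_top := prod_asymp _
    (fun i (x : ℝ) => ((x ^ (-((p i:ℝ) + 1) / 2) : ℝ) : ℂ) * th (p i) (1 / x)) c hc

lemma even_case {n : ℕ} (hn : 0 < n) (p : Fin n → ℕ) (hp : ∀ i, Even (p i)) :
    ∃ g : ℂ → ℂ,
      DifferentiableOn ℂ g {s : ℂ | s ≠ (n : ℂ) + ∑ i, (p i : ℂ)} ∧
      (∀ s : ℂ, (n : ℝ) + ∑ i, (p i : ℝ) < s.re → HasSum (zetaMonTerm p s) (g s)) ∧
      Tendsto (fun s => (s - ((n : ℂ) + ∑ i, (p i : ℂ))) * g s)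
          (𝓝[≠] ((n : ℂ) + ∑ i, (p i : ℂ)))
          (𝓝 (2 * (∏ i, ((Real.Gamma (((p i : ℝ) + 1) / 2) : ℝ) : ℂ)) /
            ((Real.Gamma (((n : ℝ) + ∑ i, (p i : ℝ)) / 2) : ℝ) : ℂ))) := by
  choose c hc1 hc using fun i => th_zero (p i)
  obtain ⟨P, hP⟩ : ∃ P, P = thetaPair hn p c hc := ⟨_, rfl⟩
  have hk : P.k = ((n : ℝ) + ∑ i, (p i : ℝ)) / 2 := by rw [hP]; rfl
  have hε : P.ε = 1 := by rw [hP]; rfl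
  have hg₀ : P.g₀ = ∏ i, c i := by rw [hP]; rfl
  have hff : ∀ t, P.f t - P.f₀ = ∏ i, th (p i) t - ∏ i, (0:ℂ) ^ p i := by
    intro t; rw [hP]; rfl
  have hpos := sigma_pos hn p
  set K : ℝ := (n : ℝ) + ∑ i, (p i : ℝ) with hK
  have hKc : (n : ℂ) + ∑ i, (p i : ℂ) = (K : ℂ) := by rw [hK]; push_cast; rfl
  rw [hKc]
  let G : ℂ → ℂ := fun s => (Real.pi : ℂ) ^ (s / 2) * ((Complex.Gamma (s / 2))⁻¹ * P.Λ₀ (s / 2)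
      - P.f₀ * (Complex.Gamma (s / 2 + 1))⁻¹)
  let H : ℂ → ℂ := fun s => (Real.pi : ℂ) ^ (s / 2) * (Complex.Gamma (s / 2))⁻¹ * P.g₀
  have hpi : (Real.pi : ℂ) ≠ 0 := by exact_mod_cast Real.pi_ne_zero
  have hdpi : Differentiable ℂ fun s : ℂ => (Real.pi : ℂ) ^ (s / 2) := by
    intro s
    exact (differentiableAt_id.div_const 2).const_cpow (Or.inl hpi)
  have hdG1 : Differentiable ℂ fun s : ℂ => (Complex.Gamma (s / 2))⁻¹ :=
    Complex.differentiable_one_div_Gamma.comp (differentiable_id.div_const 2)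
  have hdG2 : Differentiable ℂ fun s : ℂ => (Complex.Gamma (s / 2 + 1))⁻¹ :=
    Complex.differentiable_one_div_Gamma.comp ((differentiable_id.div_const 2).add_const 1)
  have hdL : Differentiable ℂ fun s : ℂ => P.Λ₀ (s / 2) :=
    P.differentiable_Λ₀.comp (differentiable_id.div_const 2)
  have hG : Differentiable ℂ G := hdpi.mul ((hdG1.mul hdL).sub (hdG2.const_mul _))
  have hH : Differentiable ℂ H := (hdpi.mul hdG1).mul_const _
  refine ⟨fun s => G s + 2 * H s / (s - K), ?_, ?_, ?_⟩
  · intro s hs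
    refine DifferentiableAt.differentiableWithinAt ?_
    exact (hG s).add (((hH s).const_mul 2).div ((differentiableAt_id).sub_const _)
      (sub_ne_zero.2 hs))
  · intro s hs
    have hs1 : 0 < s.re := hpos.trans hs
    have hs0 : s ≠ 0 := by rintro rfl; simp at hs1
    have hsK : s - K ≠ 0 := by
      intro h
      rw [sub_eq_zero.1 h] at hs
      simp at hs
    have h1 := hasSum_mellin_pi_mul_sq (a := fun k : Fin n → ℤ => ∏ i, ((k i : ℤ) : ℂ) ^ p i)
      (r := znorm) (F := fun t => P.f t - P.f₀) hs1
      (fun t ht => by rw [hff]; exact theta_hasSum p ht) (main_summable n hn p s.re hs)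
    have hre : P.k < (s / 2).re := by
      rw [hk, Complex.div_ofNat_re]; linarith
    rw [(P.hasMellin hre).2] at h1
    have hGR : Complex.Gammaℝ s ≠ 0 := Complex.Gammaℝ_ne_zero_of_re_pos hs1
    have h2 := h1.mul_left (Complex.Gammaℝ s)⁻¹
    have hval : (Complex.Gammaℝ s)⁻¹ * P.Λ (s / 2) = G s + 2 * H s / (s - K) := by
      have hGa : Complex.Gamma (s / 2) ≠ 0 :=
        Complex.Gamma_ne_zero_of_re_pos (by rw [Complex.div_ofNat_re]; positivity)
      have hG1 : Complex.Gamma (s / 2 + 1) = s / 2 * Complex.Gamma (s / 2) :=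
        Complex.Gamma_add_one _ (div_ne_zero hs0 two_ne_zero)
      have hL : P.Λ (s / 2) = P.Λ₀ (s / 2) - 2 / s * P.f₀ + 2 / (s - K) * P.g₀ := by
        rw [WeakFEPair.Λ, hk, hε, smul_eq_mul, smul_eq_mul]
        have : ((K / 2 : ℝ) : ℂ) - s / 2 = - ((s - K) / 2) := by push_cast; ring
        rw [this]
        field_simp
        ring
      rw [hL, Complex.Gammaℝ_def, mul_inv, neg_div, Complex.cpow_neg, inv_inv]
      simp only [G, H, hG1]
      field_simp
    rw [hval] at h2
    refine h2.congr_fun fun k => ?_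
    rw [term_eq p s hs0, mul_div_assoc, inv_mul_cancel_left₀ hGR]
  · have hlim : Tendsto (fun s : ℂ => (s - K) * G s + 2 * H s) (𝓝[≠] (K:ℂ))
        (𝓝 (((K:ℂ) - K) * G K + 2 * H K)) := by
      apply Tendsto.mono_left _ nhdsWithin_le_nhds
      apply Continuous.tendsto (x := (K : ℂ))
      have := hG.continuous
      have := hH.continuous
      fun_prop
    have hval : ((K:ℂ) - K) * G K + 2 * H K =
        2 * (∏ i, ((Real.Gamma (((p i : ℝ) + 1) / 2) : ℝ) : ℂ)) /
            ((Real.Gamma (K / 2) : ℝ) : ℂ) := by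
      have hc2 : ∏ i, c i = ((Real.pi ^ (-(K / 2)) : ℝ) : ℂ) *
          ∏ i, ((Real.Gamma (((p i : ℝ) + 1) / 2) : ℝ) : ℂ) := by
        have : Real.pi ^ (-(K / 2)) = ∏ i, Real.pi ^ (-((p i:ℝ) + 1) / 2) := by
          rw [← Real.rpow_sum_of_pos Real.pi_pos, ← Finset.sum_div]
          congr 1
          simp only [neg_add, Finset.sum_add_distrib, Finset.sum_neg_distrib, Finset.sum_const,
            Finset.card_univ, Fintype.card_fin, hK]
          simp
          ring
        rw [this, Complex.ofReal_prod, ← Finset.prod_mul_distrib]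
        refine Finset.prod_congr rfl fun i _ => ?_
        rw [hc1 i (hp i), Complex.ofReal_mul]
      have e1 : (Real.pi : ℂ) ^ ((K : ℂ) / 2) = ((Real.pi ^ (K / 2) : ℝ) : ℂ) := by
        rw [Complex.ofReal_cpow Real.pi_pos.le]; push_cast; rfl
      have e2 : Complex.Gamma ((K : ℂ) / 2) = ((Real.Gamma (K / 2) : ℝ) : ℂ) := by
        rw [← Complex.Gamma_ofReal]; push_cast; rfl
      have e3 : ((Real.pi ^ (K / 2) : ℝ) : ℂ) * ((Real.pi ^ (-(K / 2)) : ℝ) : ℂ) = 1 := by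
        rw [← Complex.ofReal_mul, ← Real.rpow_add Real.pi_pos]; simp
      simp only [H, sub_self, zero_mul, zero_add, hg₀, hc2, e1, e2]
      linear_combination (2 * (((Real.Gamma (K / 2) : ℝ) : ℂ))⁻¹ *
        ∏ i, ((Real.Gamma (((p i : ℝ) + 1) / 2) : ℝ) : ℂ)) * e3
    rw [hval] at hlim
    refine hlim.congr' ?_
    filter_upwards [self_mem_nhdsWithin] with s hs
    have hsK : s - K ≠ 0 := sub_ne_zero.2 hs
    field_simp

/-- **Proposition.** `ζ_{p₁,…,pₙ}` extends meromorphically to `ℂ` with at most one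
pole, at `s = n + p₁ + ⋯ + pₙ`.  If all `pᵢ` are even the pole is simple with
residue `2 Γ((p₁+1)/2)⋯Γ((pₙ+1)/2)/Γ((n+p₁+⋯+pₙ)/2)`; if some `pᵢ` is odd the
extension is entire (indeed `ζ_{p₁,…,pₙ}` vanishes identically). -/
theorem zetaMon_meromorphic (n : ℕ) (hn : 0 < n) (p : Fin n → ℕ) :
    ∃ g : ℂ → ℂ,
      DifferentiableOn ℂ g {s : ℂ | s ≠ (n : ℂ) + ∑ i, (p i : ℂ)} ∧
      (∀ s : ℂ, (n : ℝ) + ∑ i, (p i : ℝ) < s.re → HasSum (zetaMonTerm p s) (g s)) ∧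
      ((∀ i, Even (p i)) →
        Tendsto (fun s => (s - ((n : ℂ) + ∑ i, (p i : ℂ))) * g s)
          (𝓝[≠] ((n : ℂ) + ∑ i, (p i : ℂ)))
          (𝓝 (2 * (∏ i, ((Real.Gamma (((p i : ℝ) + 1) / 2) : ℝ) : ℂ)) /
            ((Real.Gamma (((n : ℝ) + ∑ i, (p i : ℝ)) / 2) : ℝ) : ℂ)))) ∧
      ((∃ i, Odd (p i)) → ∀ s : ℂ, s ≠ (n : ℂ) + ∑ i, (p i : ℂ) → g s = 0) := by
  by_cases hp : ∀ i, Even (p i)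
  · obtain ⟨g, h1, h2, h3⟩ := even_case hn p hp
    refine ⟨g, h1, h2, fun _ => h3, fun ⟨i, hi⟩ => ?_⟩
    exact absurd (hp i) (Nat.not_even_iff_odd.2 hi)
  · refine ⟨fun _ => 0, differentiableOn_const _, fun s hs => ?_, fun h => absurd h hp,
      fun _ _ _ => rfl⟩
    push Not at hp
    obtain ⟨i, hi⟩ := hp
    exact odd_case hn p i (Nat.not_even_iff_odd.1 hi) s hs

end
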